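/- Let n ≥ 2 and let G_1, ..., G_n be finite groups. If each G_i is a solvable SST-group and gcd(|G_i|, |G_j|) = 1 for all 1 ≤ i, j ≤ n with i ≠ j, then the direct product G_1 × G_2 × ⋯ × G_n is a solvable SST-group. -/

import Mathlib

open scoped Pointwise

section Defs

variable {G : Type*} [Group G]

/-- `K` is an SS-permutable supplement of `H` in `G`: `HK = G` and `H` permutes with
every Sylow subgroup of `K`. -/
def IsSSSupplement (H K : Subgroup G) : Prop :=
  (H : Set G) * (K : Set G) = Set.univ ∧
    ∀ (p : ℕ) [Fact p.Prime] (P : Sylow p K),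
      (H : Set G) * ((P.toSubgroup.map K.subtype : Subgroup G) : Set G) =
        ((P.toSubgroup.map K.subtype : Subgroup G) : Set G) * (H : Set G)

/-- `H` is SS-permutable in `G`: `H` has a supplement `K` such that `H` permutes with
every Sylow subgroup of `K`. -/
def IsSSPermutable (H : Subgroup G) : Prop :=
  ∃ K : Subgroup G, IsSSSupplement H K

/-- `H` is NSS-permutable in `G`: `H` has a normal supplement `K` such that `H` permutes
with every Sylow subgroup of `K`. -/
def IsNSSPermutable (H : Subgroup G) : Prop :=
  ∃ K : Subgroup G, K.Normal ∧ IsSSSupplement H K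

/-- `H` is S-permutable in `G`: it permutes with every Sylow subgroup of `G`. -/
def IsSPermutable (H : Subgroup G) : Prop :=
  ∀ (p : ℕ) [Fact p.Prime] (P : Sylow p G),
    (H : Set G) * ((P : Subgroup G) : Set G) = ((P : Subgroup G) : Set G) * (H : Set G)

/-- `H` is semipermutable in `G`: `HX = XH` for every subgroup `X` with `gcd(|H|,|X|) = 1`. -/
def IsSemipermutable (H : Subgroup G) : Prop :=
  ∀ X : Subgroup G, Nat.Coprime (Nat.card H) (Nat.card X) →
    (H : Set G) * (X : Set G) = (X : Set G) * (H : Set G)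

/-- `H` is S-semipermutable in `G`: `HQ = QH` for every Sylow `q`-subgroup `Q` of `G`
with `q` a prime not dividing `|H|`. -/
def IsSSemipermutable (H : Subgroup G) : Prop :=
  ∀ (q : ℕ) [Fact q.Prime], ¬ q ∣ Nat.card H → ∀ Q : Sylow q G,
    (H : Set G) * ((Q : Subgroup G) : Set G) = ((Q : Subgroup G) : Set G) * (H : Set G)

end Defs

/-- `G` is an SST-group: SS-permutability is a transitive relation. -/
def IsSSTGroup (G : Type*) [Group G] : Prop :=
  ∀ H K : Subgroup G, H ≤ K → IsSSPermutable (H.subgroupOf K) → IsSSPermutable K →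
    IsSSPermutable H

/-- `G` is an NSST-group: NSS-permutability is a transitive relation. -/
def IsNSSTGroup (G : Type*) [Group G] : Prop :=
  ∀ H K : Subgroup G, H ≤ K → IsNSSPermutable (H.subgroupOf K) → IsNSSPermutable K →
    IsNSSPermutable H

/-- `G` is a PST-group: S-permutability is a transitive relation. -/
def IsPSTGroup (G : Type*) [Group G] : Prop :=
  ∀ H K : Subgroup G, H ≤ K → IsSPermutable (H.subgroupOf K) → IsSPermutable K →
    IsSPermutable H

/-- `G` is a BT-group: semipermutability is a transitive relation. -/
def IsBTGroup (G : Type*) [Group G] : Prop :=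
  ∀ H K : Subgroup G, H ≤ K → IsSemipermutable (H.subgroupOf K) → IsSemipermutable K →
    IsSemipermutable H

theorem Subgroup.mem_of_forall_mem_map_eval {ι : Type*} [Finite ι] {G : ι → Type*}
    [∀ i, Group (G i)]
    (hcop : ∀ i j, i ≠ j → Nat.Coprime (Nat.card (G i)) (Nat.card (G j)))
    (H : Subgroup (∀ i, G i)) {g : ∀ i, G i}
    (hg : ∀ i, g i ∈ H.map (Pi.evalMonoidHom G i)) : g ∈ H := by
  classical
  have := Fintype.ofFinite ι
  refine Subgroup.pi_mem_of_mulSingle_mem g fun i => ?_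
  obtain ⟨x, hx, hxi⟩ := hg i
  have hprod : Nat.Coprime (Nat.card (G i)) (∏ j ∈ Finset.univ.erase i, Nat.card (G j)) :=
    Nat.Coprime.prod_right fun j hj => hcop i j (Finset.ne_of_mem_erase hj).symm
  obtain ⟨m, hmi, hm⟩ := Nat.chineseRemainder hprod 1 0
  have hsingle : x ^ m = Pi.mulSingle i (g i) := by
    ext j
    obtain rfl | hj := eq_or_ne j i
    · have hxm : x j ^ m = x j ^ 1 :=
        pow_eq_pow_iff_modEq.2 (hmi.of_dvd (_root_.orderOf_dvd_natCard (x j)))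
      rw [Pi.pow_apply, hxm, pow_one, Pi.mulSingle_eq_same]
      exact hxi
    · have hdvd : Nat.card (G j) ∣ m :=
        (Finset.dvd_prod_of_mem _ (Finset.mem_erase.2 ⟨hj, Finset.mem_univ j⟩)).trans
          ((Nat.modEq_zero_iff_dvd).1 hm)
      rw [Pi.pow_apply, Pi.mulSingle_eq_of_ne hj]
      exact orderOf_dvd_iff_pow_eq_one.1 ((_root_.orderOf_dvd_natCard (x j)).trans hdvd)
  exact hsingle ▸ H.pow_mem hx m

/-- A subgroup of a product of groups of pairwise coprime orders is the product of its
projections. -/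
theorem Subgroup.eq_pi_map_eval {ι : Type*} [Finite ι] {G : ι → Type*} [∀ i, Group (G i)]
    (hcop : ∀ i j, i ≠ j → Nat.Coprime (Nat.card (G i)) (Nat.card (G j)))
    (H : Subgroup (∀ i, G i)) :
    H = Subgroup.pi Set.univ fun i => H.map (Pi.evalMonoidHom G i) :=
  le_antisymm (fun _ hg i _ => Subgroup.mem_map_of_mem (Pi.evalMonoidHom G i) hg)
    fun _ hg => H.mem_of_forall_mem_map_eval hcop fun i => hg i (Set.mem_univ i)

theorem Set.univ_pi_mul_univ_pi {ι : Type*} {G : ι → Type*} [∀ i, Mul (G i)]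
    (s t : ∀ i, Set (G i)) :
    Set.univ.pi s * Set.univ.pi t = Set.univ.pi fun i => s i * t i := by
  ext g
  simp only [Set.mem_mul, Set.mem_univ_pi]
  constructor
  · rintro ⟨x, hx, y, hy, rfl⟩ i
    exact ⟨x i, hx i, y i, hy i, rfl⟩
  · intro hg
    choose x hx y hy hxy using hg
    exact ⟨x, hx, y, hy, funext hxy⟩

theorem IsSSPermutable.map {G G' : Type*} [Group G] [Group G'] [Finite G] {H : Subgroup G}
    (hH : IsSSPermutable H) {f : G →* G'} (hf : Function.Surjective f) :
    IsSSPermutable (H.map f) := by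
  obtain ⟨K, hHK, hperm⟩ := hH
  refine ⟨K.map f, ?_, fun p _ Q => ?_⟩
  · rw [Subgroup.coe_map, Subgroup.coe_map, ← Set.image_mul, hHK, Set.image_univ,
      hf.range_eq]
  · obtain ⟨P, rfl⟩ := Sylow.mapSurjective_surjective (f.subgroupMap_surjective K) p Q
    have hmap : ((P.mapSurjective (f.subgroupMap_surjective K)).toSubgroup.map
        (K.map f).subtype) = (P.toSubgroup.map K.subtype).map f := by
      rw [Sylow.coe_mapSurjective, Subgroup.map_map, Subgroup.map_map]
      rfl
    rw [hmap, Subgroup.coe_map f, Subgroup.coe_map f, ← Set.image_mul, ← Set.image_mul,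
      hperm p P]

theorem IsSSPermutable.pi {ι : Type*} [Finite ι] {G : ι → Type*} [∀ i, Group (G i)]
    [∀ i, Finite (G i)]
    (hcop : ∀ i j, i ≠ j → Nat.Coprime (Nat.card (G i)) (Nat.card (G j)))
    {H : ∀ i, Subgroup (G i)} (hH : ∀ i, IsSSPermutable (H i)) :
    IsSSPermutable (Subgroup.pi Set.univ H) := by
  classical
  choose K hHK hperm using hH
  refine ⟨Subgroup.pi Set.univ K, ?_, fun p _ P => ?_⟩
  · rw [Subgroup.coe_pi, Subgroup.coe_pi, Set.univ_pi_mul_univ_pi]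
    simp only [hHK, Set.pi_univ]
  · let f (i : ι) : Subgroup.pi Set.univ K →* K i :=
      ((Pi.evalMonoidHom G i).comp (Subgroup.pi Set.univ K).subtype).codRestrict (K i)
        fun x => x.2 i (Set.mem_univ i)
    have hf (i : ι) : Function.Surjective (f i) := fun y =>
      ⟨⟨Pi.mulSingle i y, (Subgroup.mulSingle_mem_pi i (y : G i)).2 fun _ => y.2⟩,
        Subtype.ext (Pi.mulSingle_eq_same i (y : G i))⟩
    have hmap (i : ι) : (P.toSubgroup.map (Subgroup.pi Set.univ K).subtype).map
        (Pi.evalMonoidHom G i) = (P.mapSurjective (hf i)).toSubgroup.map (K i).subtype := by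
      rw [Sylow.coe_mapSurjective, Subgroup.map_map, Subgroup.map_map]
      rfl
    rw [Subgroup.eq_pi_map_eval hcop (P.toSubgroup.map (Subgroup.pi Set.univ K).subtype)]
    simp only [hmap, Subgroup.coe_pi, Set.univ_pi_mul_univ_pi, hperm]

theorem IsSSTGroup.pi {ι : Type*} [Finite ι] {G : ι → Type*} [∀ i, Group (G i)]
    [∀ i, Finite (G i)]
    (hcop : ∀ i j, i ≠ j → Nat.Coprime (Nat.card (G i)) (Nat.card (G j)))
    (hG : ∀ i, IsSSTGroup (G i)) : IsSSTGroup (∀ i, G i) := by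
  intro H K hHK hH hK
  rw [Subgroup.eq_pi_map_eval hcop H]
  refine IsSSPermutable.pi hcop fun i => hG i _ _ (Subgroup.map_mono hHK) ?_
    (hK.map (Function.surjective_eval i))
  have hmap : (H.subgroupOf K).map ((Pi.evalMonoidHom G i).subgroupMap K) =
      (H.map (Pi.evalMonoidHom G i)).subgroupOf (K.map (Pi.evalMonoidHom G i)) := by
    ext ⟨y, hy⟩
    simp only [Subgroup.mem_map, Subgroup.mem_subgroupOf, Subtype.ext_iff]
    constructor
    · rintro ⟨x, hx, hxy⟩
      exact ⟨x, hx, hxy⟩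
    · rintro ⟨x, hx, hxy⟩
      exact ⟨⟨x, hHK hx⟩, hx, hxy⟩
  exact hmap ▸ hH.map ((Pi.evalMonoidHom G i).subgroupMap_surjective K)

theorem isSolvable_pi {ι : Type*} [Finite ι] {G : ι → Type*} [∀ i, Group (G i)]
    (hG : ∀ i, Group.IsSolvable (G i)) : Group.IsSolvable (∀ i, G i) := by
  have := Fintype.ofFinite ι
  choose m hm using fun i => (hG i).solvable
  refine ⟨⟨Finset.univ.sup m, (Subgroup.eq_bot_iff_forall _).2 fun x hx => funext fun i => ?_⟩⟩
  have hxi : x i ∈ derivedSeries (G i) (Finset.univ.sup m) :=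
    map_derivedSeries_le_derivedSeries (Pi.evalMonoidHom G i) _
      (Subgroup.mem_map_of_mem (Pi.evalMonoidHom G i) hx)
  exact Subgroup.mem_bot.1
    (hm i ▸ derivedSeries_antitone (G i) (Finset.le_sup (Finset.mem_univ i)) hxi)

/-- Theorem H. -/
theorem theoremH (n : ℕ) (hn : 2 ≤ n) (G : Fin n → Type*)
    [∀ i, Group (G i)] [∀ i, Finite (G i)]
    (h : ∀ i, IsSolvable (G i) ∧ IsSSTGroup (G i))
    (hcop : ∀ i j : Fin n, i ≠ j → Nat.Coprime (Nat.card (G i)) (Nat.card (G j))) :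
    IsSolvable (∀ i, G i) ∧ IsSSTGroup (∀ i, G i) := by
  exact ⟨isSolvable_pi fun i => (h i).1, IsSSTGroup.pi hcop fun i => (h i).2⟩
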